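/- Let m be a natural number with m ≥ 1. Then ∫_ℝ (x² + 5ix)/((x−i)^{m+3}·(x+i)^m) dx = (2πi/(m+2)!) · g^{(m+2)}(i), where g : ℂ → ℂ is g(z) = (z² + 5iz)/(z+i)^m. -/

import Mathlib

open MeasureTheory Complex

/-!
A function holomorphic in the upper half-plane and `o(1/z)` there has vanishing principal value
integral over the real line: compare with the other three sides of a square `[-R, R] × [0, R]`.
This gives the Cauchy formula `PV ∫ (x - w)⁻ⁿ⁻¹ f(x) dx = (2πi / n!) f⁽ⁿ⁾(w)` for `f = o(zⁿ)`
by induction on `n`. Replacing `f` by its difference quotient `dslope f w` lowers both the order of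
the pole and the growth by one, at the cost of `f(w) ∫ (x - w)⁻ⁿ⁻² dx = 0`, and the `n`-th
derivative of `dslope f w` at `w` is `f⁽ⁿ⁺¹⁾(w) / (n + 1)`. For `n = 0` one first makes `f(w)`
vanish by subtracting a multiple of `(w - conj w) / (z - conj w)`, whose contribution is
the integral of the Poisson kernel. The theorem is the case `w = i`, `n = m + 2`.
-/

open Asymptotics Bornology Filter
open scoped ComplexConjugate Real Topology

section Infinity

theorem isTheta_sub_const_cobounded {V : Type*} [NormedAddCommGroup V] (c : V) :
    (fun v => v - c) =Θ[cobounded V] fun v => v := by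
  have hc : (fun _ => -c) =o[cobounded V] fun v : V => v := isLittleO_const_id_cobounded (-c)
  simpa only [sub_eq_add_neg, Pi.add_def] using hc.right_isTheta_add'.symm

theorem isLittleO_dslope {𝕜 E : Type*} [NontriviallyNormedField 𝕜] [NormedAddCommGroup E]
    [NormedSpace 𝕜 E] {f : 𝕜 → E} {u : 𝕜 → 𝕜} {w : 𝕜} {l : Filter 𝕜} (hl : l ≤ cobounded 𝕜)
    (hf : (fun z => f z - f w) =o[l] u) :
    dslope f w =o[l] fun z => z⁻¹ * u z := by
  have hslope : dslope f w =ᶠ[l] fun z => (z - w)⁻¹ • (f z - f w) := by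
    filter_upwards [hl (eventually_ne_cobounded w)] with z hz
    rw [dslope_of_ne f hz, slope_def_module]
  have hinv : (fun z => (z - w)⁻¹) =O[l] fun z => z⁻¹ :=
    ((isTheta_sub_const_cobounded w).inv.mono hl).isBigO
  exact hslope.trans_isLittleO (hinv.smul_isLittleO hf)

theorem isLittleO_dslope_pow {𝕜 E : Type*} [NontriviallyNormedField 𝕜] [NormedAddCommGroup E]
    [NormedSpace 𝕜 E] {f : 𝕜 → E} {w : 𝕜} {l : Filter 𝕜} (hl : l ≤ cobounded 𝕜) {n : ℕ}
    (hf : f =o[l] fun z => z ^ (n + 1)) :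
    dslope f w =o[l] fun z => z ^ n := by
  have hconst : (fun _ => f w) =o[l] fun z : 𝕜 => z ^ (n + 1) :=
    isLittleO_const_left.2 <| .inr <| by
      simpa only [Function.comp_def, norm_pow] using
        (tendsto_pow_atTop n.succ_ne_zero).comp (tendsto_norm_cobounded_atTop.mono_left hl)
  refine (isLittleO_dslope hl (hf.sub hconst)).congr' .rfl ?_
  filter_upwards [hl (eventually_ne_cobounded 0)] with z hz
  rw [pow_succ', inv_mul_cancel_left₀ hz]

theorem isLittleO_pow_of_isBigO_zpow_sub_one {𝕜 E : Type*} [NontriviallyNormedField 𝕜]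
    [NormedAddCommGroup E] {f : 𝕜 → E} {l : Filter 𝕜} (hl : l ≤ cobounded 𝕜) {n : ℕ}
    (hf : f =O[l] fun z => z ^ (n - 1 : ℤ)) :
    f =o[l] fun z => z ^ n := by
  have hinv : (fun z : 𝕜 => z⁻¹) =o[l] fun _ => (1 : 𝕜) :=
    (isLittleO_one_iff 𝕜).2 (tendsto_inv₀_cobounded.mono_left hl)
  refine hf.trans_isLittleO <|
    ((isBigO_refl (fun z : 𝕜 => z ^ n) l).mul_isLittleO hinv).congr' ?_ (by simp)
  filter_upwards [hl (eventually_ne_cobounded 0)] with z hz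
  rw [zpow_sub_one₀ hz, zpow_natCast]

theorem integrable_of_isBigO_cobounded {E : Type*} [NormedAddCommGroup E] {f : ℝ → E}
    (hf : LocallyIntegrable f) (hO : f =O[cobounded ℝ] fun x => (x ^ 2)⁻¹) : Integrable f := by
  have hone : (fun _ => (1 : ℝ)) =o[cobounded ℝ] fun x : ℝ => x ^ 2 := by
    simpa using isLittleO_pow_pow_cobounded_of_lt (R := ℝ) two_pos
  have hinv : (fun x : ℝ => (x ^ 2)⁻¹) =O[cobounded ℝ] fun x => (1 + x ^ 2)⁻¹ :=
    hone.right_isTheta_add.inv.isBigO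
  rw [Metric.cobounded_eq_cocompact] at hO hinv
  exact hf.integrable_of_isBigO_cocompact (hO.trans hinv)
    (integrable_inv_one_add_sq.integrableAtFilter _)

end Infinity

section Dslope

theorem diffContOnCl_dslope {E : Type*} [NormedAddCommGroup E] [NormedSpace ℂ E] [CompleteSpace E]
    {f : ℂ → E} {s : Set ℂ} {w : ℂ} (hs : s ∈ 𝓝 w) (hf : DiffContOnCl ℂ f s) :
    DiffContOnCl ℂ (dslope f w) s where
  differentiableOn := (differentiableOn_dslope hs).2 hf.differentiableOn
  continuousOn := (continuousOn_dslope (mem_of_superset hs subset_closure)).2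
    ⟨hf.continuousOn, hf.differentiableOn.differentiableAt hs⟩

theorem succ_smul_iteratedDeriv_dslope {𝕜 E : Type*} [NontriviallyNormedField 𝕜]
    [NormedAddCommGroup E] [NormedSpace 𝕜 E] [CompleteSpace E] {f : 𝕜 → E} {w : 𝕜}
    (hf : AnalyticAt 𝕜 f w) (n : ℕ) :
    (n + 1) • iteratedDeriv n (dslope f w) w = iteratedDeriv (n + 1) f w := by
  obtain ⟨p, hp⟩ := hf
  have hcoeff {g : 𝕜 → E} {q : FormalMultilinearSeries 𝕜 𝕜 E} (hq : HasFPowerSeriesAt g q w)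
      (k : ℕ) : k.factorial • q.coeff k = iteratedDeriv k g w := by
    obtain ⟨r, hr⟩ := hq
    rw [iteratedDeriv_eq_iteratedFDeriv]
    exact hr.factorial_smul 1 k
  rw [← hcoeff hp, ← hcoeff hp.has_fpower_series_dslope_fslope, p.coeff_fslope, smul_smul,
    Nat.factorial_succ]

theorem inv_sub_pow_smul_eq_add {𝕜 E : Type*} [NontriviallyNormedField 𝕜] [NormedAddCommGroup E]
    [NormedSpace 𝕜 E] (f : 𝕜 → E) {w z : 𝕜} (hz : z - w ≠ 0) (n : ℕ) :
    ((z - w) ^ (n + 2))⁻¹ • f z =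
      ((z - w) ^ (n + 1))⁻¹ • dslope f w z + ((z - w) ^ (n + 2))⁻¹ • f w := by
  have hdslope : ((z - w) ^ (n + 1))⁻¹ • dslope f w z =
      ((z - w) ^ (n + 2))⁻¹ • (z - w) • dslope f w z := by
    rw [smul_smul, pow_succ _ (n + 1), mul_inv, inv_mul_cancel_right₀ hz]
  rw [hdslope, ← smul_add, sub_smul_dslope, sub_add_cancel]

end Dslope

section HalfPlane

variable {E : Type*} [NormedAddCommGroup E] [NormedSpace ℂ E] {f : ℂ → E} {w : ℂ}

theorem continuousOn_setOf_im_nonneg (hf : DiffContOnCl ℂ f {z | 0 < z.im}) :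
    ContinuousOn f {z | 0 ≤ z.im} := by
  simpa only [closure_setOfPred_lt_im] using hf.continuousOn

theorem continuous_comp_ofReal_of_diffContOnCl (hf : DiffContOnCl ℂ f {z | 0 < z.im}) :
    Continuous fun x : ℝ => f x :=
  (continuousOn_setOf_im_nonneg hf).comp_continuous continuous_ofReal fun _ => by simp

theorem norm_intervalIntegral_le_of_diffContOnCl {R C : ℝ}
    (hf : DiffContOnCl ℂ f {z | 0 < z.im}) (hR : 0 ≤ R)
    (hC : ∀ z : ℂ, 0 ≤ z.im → R ≤ ‖z‖ → ‖f z‖ ≤ C) :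
    ‖∫ x : ℝ in -R..R, f x‖ ≤ 4 * C * R := by
  set bottom := ∫ x : ℝ in -R..R, f x
  set top := ∫ x : ℝ in -R..R, f (x + R * I)
  set right := ∫ y : ℝ in 0..R, f (R + y * I)
  set left := ∫ y : ℝ in 0..R, f (-R + y * I)
  have hrect : bottom - top + I • right - I • left = 0 := by
    have hclosed : Set.uIcc (-R) R ×ℂ Set.uIcc 0 R ⊆ {z | 0 ≤ z.im} := fun z hz => by
      simpa only [inf_of_le_left hR] using! hz.2.1
    have hopen : Set.Ioo (min (-R) R) (max (-R) R) ×ℂ Set.Ioo (min 0 R) (max 0 R) ⊆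
        {z | 0 < z.im} := fun z hz => by
      simpa only [min_eq_left hR] using! hz.2.1
    simpa using integral_boundary_rect_eq_zero_of_continuousOn_of_differentiableOn f
      (-R : ℂ) (R + R * I)
      ((continuousOn_setOf_im_nonneg hf).mono <| by simpa using hclosed)
      (hf.differentiableOn.mono <| by simpa using hopen)
  have htop : ‖top‖ ≤ C * |R - -R| :=
    intervalIntegral.norm_integral_le_of_norm_le_const fun x _ =>
      hC _ (by simpa using hR) (by simpa [abs_of_nonneg hR] using abs_im_le_norm (x + R * I))
  have hright : ‖right‖ ≤ C * |R - 0| :=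
    intervalIntegral.norm_integral_le_of_norm_le_const fun y hy =>
      hC _ (by simpa using (Set.uIoc_of_le hR ▸ hy).1.le)
        (by simpa [abs_of_nonneg hR] using abs_re_le_norm (R + y * I))
  have hleft : ‖left‖ ≤ C * |R - 0| :=
    intervalIntegral.norm_integral_le_of_norm_le_const fun y hy =>
      hC _ (by simpa using (Set.uIoc_of_le hR ▸ hy).1.le)
        (by simpa [abs_of_nonneg hR] using abs_re_le_norm (-R + y * I))
  calc ‖bottom‖ = ‖top - I • right + I • left‖ := by
        congr 1; rw [← sub_eq_zero, ← hrect]; abel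
    _ ≤ ‖top‖ + ‖right‖ + ‖left‖ := by
        simpa only [norm_smul, norm_I, one_mul] using
          norm_add_le_of_le (norm_sub_le top (I • right)) (le_refl ‖I • left‖)
    _ ≤ C * |R - -R| + C * |R - 0| + C * |R - 0| := by gcongr
    _ = 4 * C * R := by
        rw [sub_zero, sub_neg_eq_add, abs_of_nonneg hR, abs_of_nonneg (add_nonneg hR hR)]; ring

theorem tendsto_intervalIntegral_zero_of_isLittleO_inv (hf : DiffContOnCl ℂ f {z | 0 < z.im})
    (ho : f =o[cobounded ℂ ⊓ 𝓟 {z | 0 ≤ z.im}] fun z => z⁻¹) :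
    Tendsto (fun R : ℝ => ∫ x : ℝ in -R..R, f x) atTop (𝓝 0) := by
  refine (isLittleO_one_iff ℝ).1 (isLittleO_iff.2 fun ε hε => ?_)
  obtain ⟨R₀, -, hR₀⟩ := (hasBasis_cobounded_norm.inf_principal _).eventually_iff.1
    (isLittleO_iff.1 ho (show 0 < ε / 4 by positivity))
  filter_upwards [eventually_ge_atTop R₀, eventually_gt_atTop 0] with R hR hR_pos
  have hbound : ∀ z : ℂ, 0 ≤ z.im → R ≤ ‖z‖ → ‖f z‖ ≤ ε / 4 * R⁻¹ := fun z hz hRz =>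
    (hR₀ ⟨hR.trans hRz, hz⟩).trans <| by rw [norm_inv]; gcongr
  calc ‖∫ x : ℝ in -R..R, f x‖ ≤ 4 * (ε / 4 * R⁻¹) * R :=
        norm_intervalIntegral_le_of_diffContOnCl hf hR_pos.le hbound
    _ = ε * ‖(1 : ℝ)‖ := by rw [norm_one]; field_simp

theorem ofReal_sub_ne_zero (hw : w.im ≠ 0) (x : ℝ) : (x : ℂ) - w ≠ 0 := fun h =>
  hw <| by simpa using congrArg im h

theorem continuous_inv_ofReal_sub_pow (hw : w.im ≠ 0) (n : ℕ) :
    Continuous fun x : ℝ => (((x : ℂ) - w) ^ n)⁻¹ :=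
  Continuous.inv₀ (by fun_prop) fun x => pow_ne_zero n (ofReal_sub_ne_zero hw x)

theorem diffContOnCl_inv_sub_pow (hw : w.im < 0) (n : ℕ) :
    DiffContOnCl ℂ (fun z => ((z - w) ^ n)⁻¹) {z | 0 < z.im} := by
  have hpow : Differentiable ℂ fun z => (z - w) ^ n := by fun_prop
  refine hpow.diffContOnCl.inv fun z hz => pow_ne_zero n (sub_ne_zero.2 ?_)
  rw [closure_setOfPred_lt_im] at hz
  rintro rfl
  exact hw.not_ge hz

theorem tendsto_intervalIntegral_inv_sub_pow_zero (hw : 0 < w.im) (n : ℕ) :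
    Tendsto (fun R : ℝ => ∫ x : ℝ in -R..R, (((x : ℂ) - w) ^ (n + 2))⁻¹) atTop (𝓝 0) := by
  have hdecay : (fun z => ((z - -w) ^ (n + 2))⁻¹) =o[cobounded ℂ] fun z => z⁻¹ := by
    have hpow : (fun z : ℂ => z) =o[cobounded ℂ] fun z => z ^ (n + 2) := by
      simpa using isLittleO_pow_pow_cobounded_of_lt (R := ℂ) (show 1 < n + 2 by omega)
    refine ((isTheta_sub_const_cobounded (-w)).pow (n + 2)).inv.trans_isLittleO ?_
    exact hpow.inv_rev ((eventually_ne_cobounded 0).mono fun z hz h => absurd h hz)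
  have hzero := tendsto_intervalIntegral_zero_of_isLittleO_inv
    (diffContOnCl_inv_sub_pow (w := -w) (by simpa using hw) (n + 2)) (hdecay.mono inf_le_left)
  -- The substitution `x ↦ -x` moves the pole to the lower half-plane.
  have hreflect (x : ℝ) : ((((-x : ℝ) : ℂ) - w) ^ (n + 2))⁻¹ =
      ((-1) ^ (n + 2))⁻¹ * ((x - -w) ^ (n + 2))⁻¹ := by
    rw [← mul_inv, ← mul_pow, ofReal_neg]
    ring
  have hint (R : ℝ) : ∫ x : ℝ in -R..R, (((x : ℂ) - w) ^ (n + 2))⁻¹ =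
      ((-1) ^ (n + 2))⁻¹ * ∫ x : ℝ in -R..R, (((x : ℂ) - -w) ^ (n + 2))⁻¹ := by
    rw [← intervalIntegral.integral_const_mul, ← intervalIntegral.integral_congr fun x _ =>
      hreflect x, intervalIntegral.integral_comp_neg fun x : ℝ => (((x : ℂ) - w) ^ (n + 2))⁻¹,
      neg_neg]
  simpa only [hint, mul_zero] using hzero.const_mul ((-1) ^ (n + 2))⁻¹

theorem inv_sub_mul_sub_conj_eq_cauchyPDFReal (hw : 0 < w.im) (x : ℝ) :
    ((x : ℂ) - w)⁻¹ * ((w - conj w) * (x - conj w)⁻¹) =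
      2 * π * I * (ProbabilityTheory.cauchyPDFReal w.re w.im.toNNReal x : ℝ) := by
  have hfactor : ((x : ℂ) - w) * (x - conj w) = ((x - w.re) ^ 2 + w.im ^ 2 : ℝ) := by
    rw [← conj_ofReal x, ← map_sub, conj_ofReal, mul_conj, normSq_apply]
    simp [sq]
  have hpi : (π : ℂ) ≠ 0 := ofReal_ne_zero.2 Real.pi_ne_zero
  rw [ProbabilityTheory.cauchyPDFReal_def, Real.coe_toNNReal _ hw.le, mul_left_comm, ← mul_inv,
    hfactor, sub_conj]
  push_cast
  field_simp

theorem tendsto_intervalIntegral_inv_sub_mul_sub_conj (hw : 0 < w.im) :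
    Tendsto (fun R : ℝ => ∫ x : ℝ in -R..R, ((x : ℂ) - w)⁻¹ * ((w - conj w) * (x - conj w)⁻¹))
      atTop (𝓝 (2 * π * I)) := by
  have hlim := (intervalIntegral_tendsto_integral
    (ProbabilityTheory.integrable_cauchyPDFReal w.re (γ := w.im.toNNReal))
    tendsto_neg_atTop_atBot tendsto_id).ofReal.const_mul (2 * π * I)
  rw [ProbabilityTheory.integral_cauchyPDFReal_eq_one w.re (Real.toNNReal_pos.2 hw).ne'] at hlim
  simp_rw [inv_sub_mul_sub_conj_eq_cauchyPDFReal hw, intervalIntegral.integral_const_mul,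
    intervalIntegral.integral_ofReal]
  simpa only [id, ofReal_one, mul_one] using hlim

theorem integrable_inv_sub_pow_smul (hw : w.im ≠ 0) (n : ℕ)
    (hf : Continuous fun x : ℝ => f x)
    (hO : f =O[cobounded ℂ ⊓ 𝓟 {z | 0 ≤ z.im}] fun z => z ^ (n - 1 : ℤ)) :
    Integrable fun x : ℝ => (((x : ℂ) - w) ^ (n + 1))⁻¹ • f x := by
  have hdecay : (fun z => ((z - w) ^ (n + 1))⁻¹ • f z) =O[cobounded ℂ ⊓ 𝓟 {z | 0 ≤ z.im}]
      fun z => (z ^ 2)⁻¹ := by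
    refine ((((isTheta_sub_const_cobounded w).pow (n + 1)).inv.isBigO.mono
      inf_le_left).smul hO).congr' .rfl ?_
    filter_upwards [(eventually_ne_cobounded (0 : ℂ)).filter_mono inf_le_left] with z hz
    rw [smul_eq_mul, zpow_sub_one₀ hz, zpow_natCast]
    field_simp
    ring
  have hreal : Tendsto ofReal (cobounded ℝ) (cobounded ℂ ⊓ 𝓟 {z | 0 ≤ z.im}) :=
    tendsto_inf.2 ⟨RCLike.tendsto_ofReal_cobounded_cobounded ℂ, tendsto_principal.2 <| by simp⟩
  refine integrable_of_isBigO_cobounded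
    ((continuous_inv_ofReal_sub_pow hw _).smul hf).locallyIntegrable ?_
  simpa only [Function.comp_def, ← ofReal_pow, ← ofReal_inv, isBigO_ofReal_right] using
    hdecay.comp_tendsto hreal

theorem setOf_im_pos_mem_nhds (hw : 0 < w.im) : {z : ℂ | 0 < z.im} ∈ 𝓝 w :=
  (isOpen_lt continuous_const continuous_im).mem_nhds hw

variable [CompleteSpace E]

theorem tendsto_intervalIntegral_inv_sub_smul_zero (hw : 0 < w.im)
    (hf : DiffContOnCl ℂ f {z | 0 < z.im})
    (hf_zero : Tendsto f (cobounded ℂ ⊓ 𝓟 {z | 0 ≤ z.im}) (𝓝 0)) (hfw : f w = 0) :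
    Tendsto (fun R : ℝ => ∫ x : ℝ in -R..R, ((x : ℂ) - w)⁻¹ • f x) atTop (𝓝 0) := by
  have hdslope (x : ℝ) : dslope f w x = ((x : ℂ) - w)⁻¹ • f x := by
    rw [dslope_of_ne f (sub_ne_zero.1 (ofReal_sub_ne_zero hw.ne' x)), slope_def_module, hfw,
      sub_zero]
  have hdecay : (fun z => f z - f w) =o[cobounded ℂ ⊓ 𝓟 {z | 0 ≤ z.im}] fun _ => (1 : ℂ) := by
    simpa only [hfw, sub_zero] using (isLittleO_one_iff ℂ).2 hf_zero
  simp_rw [← hdslope]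
  refine tendsto_intervalIntegral_zero_of_isLittleO_inv
    (diffContOnCl_dslope (setOf_im_pos_mem_nhds hw) hf) ?_
  simpa only [mul_one] using isLittleO_dslope inf_le_left hdecay

theorem tendsto_intervalIntegral_inv_sub_smul (hw : 0 < w.im)
    (hf : DiffContOnCl ℂ f {z | 0 < z.im})
    (hf_zero : Tendsto f (cobounded ℂ ⊓ 𝓟 {z | 0 ≤ z.im}) (𝓝 0)) :
    Tendsto (fun R : ℝ => ∫ x : ℝ in -R..R, ((x : ℂ) - w)⁻¹ • f x) atTop
      (𝓝 ((2 * π * I : ℂ) • f w)) := by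
  let P : ℂ → ℂ := fun z => (w - conj w) * (z - conj w)⁻¹
  have hP : DiffContOnCl ℂ P {z | 0 < z.im} := by
    simpa only [pow_one] using!
      (diffContOnCl_inv_sub_pow (w := conj w) (by simpa using hw) 1).const_smul (w - conj w)
  have hPw : P w = 1 := mul_inv_cancel₀ <| by
    simpa [sub_conj] using hw.ne'
  have hP_zero : Tendsto P (cobounded ℂ) (𝓝 0) := by
    simpa only [mul_zero] using
      ((isTheta_sub_const_cobounded (conj w)).inv.tendsto_zero_iff.2
        tendsto_inv₀_cobounded).const_mul (w - conj w)
  have hzero : Tendsto (fun R : ℝ => ∫ x : ℝ in -R..R, ((x : ℂ) - w)⁻¹ • (f x - P x • f w)) atTop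
      (𝓝 0) :=
    tendsto_intervalIntegral_inv_sub_smul_zero hw (hf.sub (hP.smul_const (f w)))
      (by simpa using! hf_zero.sub ((hP_zero.mono_left inf_le_left).smul_const (f w)))
      (by simp only [Pi.sub_apply, hPw, one_smul, sub_self])
  have hpoisson := (tendsto_intervalIntegral_inv_sub_mul_sub_conj hw).smul_const (f w)
  have hker : Continuous fun x : ℝ => ((x : ℂ) - w)⁻¹ := by
    simpa only [pow_one] using continuous_inv_ofReal_sub_pow hw.ne' 1
  have hPx : Continuous fun x : ℝ => P x := continuous_comp_ofReal_of_diffContOnCl hP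
  have hcont : Continuous fun x : ℝ => ((x : ℂ) - w)⁻¹ • (f x - P x • f w) :=
    hker.smul ((continuous_comp_ofReal_of_diffContOnCl hf).sub (hPx.smul continuous_const))
  have hPcont : Continuous fun x : ℝ => (((x : ℂ) - w)⁻¹ * P x) • f w :=
    (hker.mul hPx).smul continuous_const
  have hsplit (x : ℝ) : ((x : ℂ) - w)⁻¹ • f x =
      ((x : ℂ) - w)⁻¹ • (f x - P x • f w) + (((x : ℂ) - w)⁻¹ * P x) • f w := by
    rw [smul_sub, smul_smul, sub_add_cancel]
  simp_rw [hsplit, intervalIntegral.integral_add (hcont.intervalIntegrable _ _)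
    (hPcont.intervalIntegrable _ _), intervalIntegral.integral_smul_const]
  simpa only [zero_add] using hzero.add hpoisson

theorem tendsto_intervalIntegral_inv_sub_pow_smul (hw : 0 < w.im) (n : ℕ)
    (hf : DiffContOnCl ℂ f {z | 0 < z.im})
    (ho : f =o[cobounded ℂ ⊓ 𝓟 {z | 0 ≤ z.im}] fun z => z ^ n) :
    Tendsto (fun R : ℝ => ∫ x : ℝ in -R..R, (((x : ℂ) - w) ^ (n + 1))⁻¹ • f x) atTop
      (𝓝 ((2 * π * I / n.factorial : ℂ) • iteratedDeriv n f w)) := by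
  induction n generalizing f with
  | zero =>
    simpa using tendsto_intervalIntegral_inv_sub_smul hw hf (by simpa using ho)
  | succ n ih =>
    have hnhds := setOf_im_pos_mem_nhds hw
    have hg : DiffContOnCl ℂ (dslope f w) {z | 0 < z.im} := diffContOnCl_dslope hnhds hf
    have hg_decay : dslope f w =o[cobounded ℂ ⊓ 𝓟 {z | 0 ≤ z.im}] fun z => z ^ n :=
      isLittleO_dslope_pow inf_le_left ho
    have hlim := (ih hg hg_decay).add
      ((tendsto_intervalIntegral_inv_sub_pow_zero hw n).smul_const (f w))
    have hderiv : (2 * π * I / n.factorial : ℂ) • iteratedDeriv n (dslope f w) w =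
        (2 * π * I / (n + 1).factorial : ℂ) • iteratedDeriv (n + 1) f w := by
      rw [← succ_smul_iteratedDeriv_dslope (hf.differentiableOn.analyticAt hnhds),
        ← Nat.cast_smul_eq_nsmul ℂ, smul_smul, Nat.factorial_succ]
      congr 1
      push_cast
      field_simp
    rw [zero_smul, add_zero, hderiv] at hlim
    have hgcont : Continuous fun x : ℝ => (((x : ℂ) - w) ^ (n + 1))⁻¹ • dslope f w x :=
      (continuous_inv_ofReal_sub_pow hw.ne' _).smul (continuous_comp_ofReal_of_diffContOnCl hg)
    have hconst : Continuous fun x : ℝ => (((x : ℂ) - w) ^ (n + 2))⁻¹ • f w :=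
      (continuous_inv_ofReal_sub_pow hw.ne' _).smul continuous_const
    simp_rw [fun x : ℝ => inv_sub_pow_smul_eq_add f (ofReal_sub_ne_zero hw.ne' x) n,
      intervalIntegral.integral_add (hgcont.intervalIntegrable _ _)
        (hconst.intervalIntegrable _ _), intervalIntegral.integral_smul_const]
    exact hlim

theorem integral_inv_sub_pow_smul (hw : 0 < w.im) (n : ℕ)
    (hf : DiffContOnCl ℂ f {z | 0 < z.im})
    (hO : f =O[cobounded ℂ ⊓ 𝓟 {z | 0 ≤ z.im}] fun z => z ^ (n - 1 : ℤ)) :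
    ∫ x : ℝ, (((x : ℂ) - w) ^ (n + 1))⁻¹ • f x =
      (2 * π * I / n.factorial : ℂ) • iteratedDeriv n f w :=
  tendsto_nhds_unique
    (intervalIntegral_tendsto_integral (integrable_inv_sub_pow_smul hw.ne' n
      (continuous_comp_ofReal_of_diffContOnCl hf) hO) tendsto_neg_atTop_atBot tendsto_id)
    (tendsto_intervalIntegral_inv_sub_pow_smul hw n hf
      (isLittleO_pow_of_isBigO_zpow_sub_one inf_le_left hO))

end HalfPlane

theorem isBigO_sq_add_mul_div_sub_pow {𝕜 : Type*} [NormedField 𝕜] (a c : 𝕜) {m : ℕ} (hm : 1 ≤ m) :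
    (fun z : 𝕜 => (z ^ 2 + c * z) / (z - a) ^ m) =O[cobounded 𝕜] fun z => z := by
  have hnum : (fun z : 𝕜 => z ^ 2 + c * z) =Θ[cobounded 𝕜] fun z => z * z := by
    have hfactor (z : 𝕜) : z ^ 2 + c * z = (z - -c) * z := by ring
    simp_rw [hfactor]
    exact (isTheta_sub_const_cobounded (-c)).mul (isTheta_refl _ _)
  have hden : (fun z : 𝕜 => z) =O[cobounded 𝕜] fun z => (z - a) ^ m := by
    simpa using (isBigO_pow_pow_cobounded_of_le (R := 𝕜) hm).trans
      ((isTheta_sub_const_cobounded a).pow m).symm.isBigO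
  have hinv := hden.inv_rev ((eventually_ne_cobounded 0).mono fun z hz h => absurd h hz)
  refine (hnum.isBigO.mul hinv).congr' (by simp [div_eq_mul_inv]) ?_
  filter_upwards [eventually_ne_cobounded 0] with z hz
  rw [mul_inv_cancel_right₀ hz]

theorem stmt8 (m : ℕ) (hm : 1 ≤ m) :
    ∫ x : ℝ, ((x : ℂ) ^ 2 + 5 * I * (x : ℂ)) /
        (((x : ℂ) - I) ^ (m + 3) * ((x : ℂ) + I) ^ m) =
      (2 * (Real.pi : ℂ) * I / (Nat.factorial (m + 2) : ℂ)) *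
        iteratedDeriv (m + 2) (fun z : ℂ => (z ^ 2 + 5 * I * z) / (z + I) ^ m) I := by
  have hdiff : DiffContOnCl ℂ (fun z : ℂ => (z ^ 2 + 5 * I * z) / (z + I) ^ m) {z | 0 < z.im} := by
    have hnum : Differentiable ℂ fun z : ℂ => z ^ 2 + 5 * I * z := by fun_prop
    simpa only [smul_eq_mul, sub_neg_eq_add, div_eq_mul_inv] using
      hnum.diffContOnCl.smul (diffContOnCl_inv_sub_pow (w := -I) (by simp) m)
  have hdecay : (fun z : ℂ => (z ^ 2 + 5 * I * z) / (z + I) ^ m) =O[cobounded ℂ]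
      fun z => z ^ (((m + 2 : ℕ) : ℤ) - 1) := by
    have hlin := isBigO_sq_add_mul_div_sub_pow (-I) (5 * I) hm
    have hpow : (fun z : ℂ => z ^ 1) =O[cobounded ℂ] fun z => z ^ (m + 1) :=
      isBigO_pow_pow_cobounded_of_le (by omega)
    have hexp : ((m + 2 : ℕ) : ℤ) - 1 = (m + 1 : ℕ) := by push_cast; ring
    simpa only [sub_neg_eq_add, pow_one, hexp, zpow_natCast] using hlin.trans (by simpa using hpow)
  rw [← smul_eq_mul (b := iteratedDeriv _ _ _),
    ← integral_inv_sub_pow_smul (by simp) _ hdiff (hdecay.mono inf_le_left)]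
  refine integral_congr_ae (.of_forall fun x => ?_)
  simp only [smul_eq_mul, div_eq_mul_inv, mul_inv]
  ring
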